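/- arXiv:1701.06404 — 3 statements merged into one kernel-verified Lean document; each statement's English description precedes it below -/
import Mathlib

section
/- Every finite simple connected 4-chordal graph is sequentially distance preserving. That is, if G contains no induced cycle of length 5 or greater, then there is an ordering v_1, …, v_n of V(G) such that for every i ≥ 1 the subgraph induced on {v_{i+1}, …, v_n} is an isometric subgraph of G. -/
open SimpleGraph

/-- `G[A]` is an isometric subgraph of `G`: it is connected and distances
within `G[A]` agree with distances in `G`. -/
def IsIsomSub {V : Type*} (G : SimpleGraph V) (A : Set V) : Prop :=
  (G.induce A).Connected ∧
    ∀ u v : A, (G.induce A).dist u v = G.dist (u : V) (v : V)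

/-- `G` is sequentially distance preserving: there is an ordering
`v_1, …, v_n` of the vertices (given by `e`, where `v_{j+1} = e j`) such that
for every `i ≥ 1` deleting the first `i` vertices leaves an isometric
subgraph. -/
def SeqDistPres {V : Type*} [Fintype V] (G : SimpleGraph V) : Prop :=
  ∃ e : Fin (Fintype.card V) ≃ V,
    ∀ i : ℕ, 1 ≤ i → i < Fintype.card V →
      IsIsomSub G {v : V | ∃ j : Fin (Fintype.card V), i ≤ (j : ℕ) ∧ e j = v}

lemma aux_no_cycle {V : Type*} (G : SimpleGraph V)
    (hch : ∀ n : ℕ, 5 ≤ n → ∀ s : Set V, IsEmpty ((G.induce s) ≃g cycleGraph n))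
    (n : ℕ) (hn : 5 ≤ n) (f : ℕ → V)
    (hinj : ∀ i j, i < j → j < n → f i ≠ f j)
    (hadj : ∀ i j, i < j → j < n → (G.Adj (f i) (f j) ↔ (j = i + 1 ∨ (i = 0 ∧ j + 1 = n)))) :
    False := by
  have cyc : ∀ i j : Fin n, i < j →
      ((cycleGraph n).Adj i j ↔ ((j : ℕ) = i + 1 ∨ ((i : ℕ) = 0 ∧ (j : ℕ) + 1 = n))) := by
    intro i j hij
    rw [cycleGraph_adj', Fin.coe_sub_iff_lt.mpr hij, Fin.coe_sub_iff_le.mpr hij.le]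
    have := i.2
    have := j.2
    have : (i : ℕ) < j := hij
    omega
  have hfi : Function.Injective (fun i : Fin n => f i) := by
    intro i j h
    rcases lt_trichotomy i j with hl | hl | hl
    · exact absurd h (hinj i j hl j.2)
    · exact hl
    · exact absurd h.symm (hinj j i hl i.2)
  have hfa : ∀ i j : Fin n, G.Adj (f i) (f j) ↔ (cycleGraph n).Adj i j := by
    intro i j
    rcases lt_trichotomy i j with hl | hl | hl
    · rw [cyc i j hl, hadj i j hl j.2]
    · subst hl; simp
    · rw [G.adj_comm, (cycleGraph n).adj_comm, cyc j i hl, hadj j i hl i.2]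
  refine (hch n hn (Set.range (fun i : Fin n => f i))).false ?_
  refine RelIso.symm ⟨Equiv.ofInjective _ hfi, ?_⟩
  intro a b
  simpa using hfa a b

lemma aux_conn_insert {V : Type*} (G : SimpleGraph V) (C : Set V)
    (hC : (G.induce C).Connected) (a c : V) (hc : c ∈ C) (hac : G.Adj a c) :
    (G.induce (insert a C)).Connected := by
  have h := induce_union_connected (G := G) (s := {a, c}) (t := C)
    (induce_pair_connected_of_adj hac).preconnected hC.preconnected ⟨c, by simp, hc⟩
  have e : ({a, c} ∪ C : Set V) = insert a C := by
    ext x; simp only [Set.mem_union, Set.mem_insert_iff, Set.mem_singleton_iff]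
    constructor
    · rintro ((h | h) | h)
      · exact Or.inl h
      · exact Or.inr (h ▸ hc)
      · exact Or.inr h
    · rintro (h | h)
      · exact Or.inl (Or.inl h)
      · exact Or.inr h
  rwa [e] at h

lemma aux_common {V : Type*} (G : SimpleGraph V)
    (hch : ∀ n : ℕ, 5 ≤ n → ∀ s : Set V, IsEmpty ((G.induce s) ≃g cycleGraph n))
    (C : Set V) (hC : (G.induce C).Connected) (v a b : V)
    (hvC : v ∉ C) (hvn : ∀ c ∈ C, ¬ G.Adj v c) (hva : G.Adj v a) (hvb : G.Adj v b)
    (hab : a ≠ b) (hnab : ¬ G.Adj a b) (ha : ∃ c ∈ C, G.Adj a c) (hb : ∃ c ∈ C, G.Adj b c) :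
    ∃ w ∈ C, G.Adj w a ∧ G.Adj w b := by
  obtain ⟨ca, hca, haca⟩ := ha
  obtain ⟨cb, hcb, hbcb⟩ := hb
  have hT := aux_conn_insert G (insert b C) (aux_conn_insert G C hC b cb hcb hbcb) a ca
    (Set.mem_insert_of_mem _ hca) haca
  set T : Set V := insert a (insert b C) with hTd
  have haT : a ∈ T := by simp [hTd]
  have hbT : b ∈ T := by simp [hTd]
  obtain ⟨p, hp⟩ := hT.exists_walk_length_eq_dist ⟨a, haT⟩ ⟨b, hbT⟩
  set L := p.length with hL
  have key : ∀ i j, i ≤ j → j ≤ L → j ≤ i + (G.induce T).dist (p.getVert i) (p.getVert j) := by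
    intro i j hij hj
    have h1 := dist_le (p.take i)
    have h2 := dist_le (p.drop j)
    have h3 := hT.dist_triangle (u := ⟨a, haT⟩) (v := p.getVert i) (w := p.getVert j)
    have h4 := hT.dist_triangle (u := ⟨a, haT⟩) (v := p.getVert j) (w := ⟨b, hbT⟩)
    rw [Walk.take_length] at h1
    rw [Walk.drop_length] at h2
    omega
  have kne : ∀ i j, i < j → j ≤ L → (p.getVert i : V) ≠ p.getVert j := by
    intro i j hij hj h
    have := key i j hij.le hj
    rw [Subtype.ext h, SimpleGraph.dist_self] at this
    omega
  have kadj : ∀ i j, i < j → j ≤ L → (G.Adj (p.getVert i) (p.getVert j) ↔ j = i + 1) := by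
    intro i j hij hj
    constructor
    · intro h
      have h' : (G.induce T).Adj (p.getVert i) (p.getVert j) := h
      have := key i j hij.le hj
      rw [dist_eq_one_iff_adj.mpr h'] at this
      omega
    · rintro rfl
      exact p.adj_getVert_succ (by omega)
  have p0 : (p.getVert 0 : V) = a := by simp
  have pL : (p.getVert L : V) = b := by simp [hL]
  have kC : ∀ i, 0 < i → i < L → (p.getVert i : V) ∈ C := by
    intro i h0 hi
    have h1 := kne 0 i h0 hi.le
    have h2 := kne i L hi le_rfl
    rw [p0] at h1
    rw [pL] at h2
    have h3 : (p.getVert i : V) ∈ T := (p.getVert i).2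
    rcases h3 with h3 | h3 | h3
    · exact absurd h3.symm h1
    · exact absurd h3 h2
    · exact h3
  have hL0 : L ≠ 0 := by
    intro h; rw [h, p0] at pL; exact hab pL
  have hL1 : L ≠ 1 := by
    intro h
    have := (kadj 0 L (by omega) le_rfl).mpr (by omega)
    rw [p0, pL] at this
    exact hnab this
  by_cases hL2 : L = 2
  · refine ⟨p.getVert 1, kC 1 (by omega) (by omega), ?_, ?_⟩
    · have := (kadj 0 1 (by omega) (by omega)).mpr rfl
      rw [p0] at this
      exact this.symm
    · have := (kadj 1 L (by omega) le_rfl).mpr (by omega)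
      rwa [pL] at this
  · exfalso
    refine aux_no_cycle G hch (L + 2) (by omega)
      (fun i => if i ≤ L then (p.getVert i : V) else v) ?_ ?_
    · intro i j hij hj
      have hiL : i ≤ L := by omega
      simp only [hiL, if_true]
      split_ifs with hjL
      · exact kne i j hij hjL
      · intro h
        rcases Nat.eq_zero_or_pos i with h0 | h0
        · subst h0; rw [p0] at h; exact hva.ne h.symm
        · rcases hiL.lt_or_eq with h1 | h1
          · exact hvC (h ▸ kC i h0 h1)
          · rw [h1, pL] at h; exact hvb.ne h.symm
    · intro i j hij hj
      have hiL : i ≤ L := by omega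
      simp only [hiL, if_true]
      split_ifs with hjL
      · rw [kadj i j hij hjL]; omega
      · rcases Nat.eq_zero_or_pos i with h0 | h0
        · subst h0; rw [p0]
          exact iff_of_true hva.symm (by omega)
        · rcases hiL.lt_or_eq with h1 | h1
          · exact iff_of_false (fun h => hvn _ (kC i h0 h1) h.symm) (by omega)
          · rw [h1, pL]; exact iff_of_true hvb.symm (by omega)

lemma aux_good {V : Type*} (G : SimpleGraph V)
    (hch : ∀ n : ℕ, 5 ≤ n → ∀ s : Set V, IsEmpty ((G.induce s) ≃g cycleGraph n)) (n : ℕ) :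
    ∀ A : Finset V, A.card = n → A.Nonempty → ∃ v ∈ A, ∀ a ∈ A, ∀ b ∈ A, G.Adj v a → G.Adj v b →
      a ≠ b → ¬ G.Adj a b → ∃ w ∈ A, w ≠ v ∧ G.Adj w a ∧ G.Adj w b := by
  classical
  induction n using Nat.strong_induction_on with
  | _ n ih =>
  intro A hA hne
  let P : Finset V → Prop := fun C => (G.induce (C : Set V)).Connected ∧
    ∃ d ∈ A, d ∉ C ∧ ∀ c ∈ C, ¬ G.Adj c d
  by_cases hex : (A.powerset.filter P).Nonempty
  · obtain ⟨C, hCm, hmax⟩ := Finset.exists_max_image _ Finset.card hex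
    rw [Finset.mem_filter, Finset.mem_powerset] at hCm
    obtain ⟨hCA, hCc, d₀, hd₀⟩ := hCm
    obtain ⟨⟨c₀, hc₀⟩⟩ := hCc.nonempty
    set D := A.filter (fun d => d ∉ C ∧ ∀ c ∈ C, ¬ G.Adj c d) with hD
    have hDA : D.card < A.card := by
      apply Finset.card_lt_card
      refine ⟨Finset.filter_subset _ _, fun h => ?_⟩
      have := h (hCA hc₀)
      rw [hD, Finset.mem_filter] at this
      exact this.2.1 hc₀
    obtain ⟨v, hvD, hv⟩ := ih D.card (hA ▸ hDA) D rfl ⟨d₀, by rw [hD, Finset.mem_filter]; exact hd₀⟩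
    have hvD' := hvD
    rw [hD, Finset.mem_filter] at hvD'
    obtain ⟨hvA, hvC, hvn⟩ := hvD'
    have full : ∀ s ∈ A, s ∉ C → ∀ c ∈ C, G.Adj s c → ∀ d ∈ D, G.Adj s d := by
      intro s hs hsC c hc hsc d hd
      rw [hD, Finset.mem_filter] at hd
      by_contra hsd
      have hP : insert s C ∈ A.powerset.filter P := by
        rw [Finset.mem_filter, Finset.mem_powerset]
        refine ⟨Finset.insert_subset hs hCA, ?_, d, hd.1, ?_, ?_⟩
        · rw [Finset.coe_insert]
          exact aux_conn_insert G C hCc s c hc hsc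
        · rw [Finset.mem_insert]
          rintro (h | h)
          · subst h; exact hd.2.2 c hc hsc.symm
          · exact hd.2.1 h
        · intro x hx
          rcases Finset.mem_insert.mp hx with rfl | hx
          · exact hsd
          · exact hd.2.2 x hx
      have := hmax _ hP
      rw [Finset.card_insert_of_notMem hsC] at this
      omega
    have dich : ∀ a ∈ A, G.Adj v a → a ∉ C ∧ (a ∈ D ∨ ∃ c ∈ C, G.Adj a c) := by
      intro a ha hva
      have haC : a ∉ C := fun h => hvn a h hva.symm
      refine ⟨haC, ?_⟩
      by_cases h : ∃ c ∈ C, G.Adj a c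
      · exact Or.inr h
      · left
        rw [hD, Finset.mem_filter]
        exact ⟨ha, haC, fun c hc hca => h ⟨c, hc, hca.symm⟩⟩
    refine ⟨v, hvA, ?_⟩
    intro a ha b hb hva hvb hab hnab
    obtain ⟨haC, ha'⟩ := dich a ha hva
    obtain ⟨hbC, hb'⟩ := dich b hb hvb
    rcases ha' with ha' | ⟨c, hc, hac⟩
    · rcases hb' with hb' | ⟨c, hc, hbc⟩
      · obtain ⟨w, hw, h⟩ := hv a ha' b hb' hva hvb hab hnab
        exact ⟨w, (Finset.mem_filter.mp hw).1, h⟩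
      · exact absurd (full b hb hbC c hc hbc a ha').symm hnab
    · rcases hb' with hb' | ⟨c', hc', hbc⟩
      · exact absurd (full a ha haC c hc hac b hb') hnab
      · obtain ⟨w, hw, h⟩ := aux_common G hch C hCc v a b hvC (fun c hc h => hvn c hc h.symm)
          hva hvb hab hnab ⟨c, hc, hac⟩ ⟨c', hc', hbc⟩
        exact ⟨w, hCA hw, fun h => hvC (h ▸ hw), h⟩
  · obtain ⟨v, hv⟩ := hne
    refine ⟨v, hv, ?_⟩
    intro a ha b hb hva hvb hab hnab
    exfalso
    apply hex
    refine ⟨{a}, ?_⟩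
    rw [Finset.mem_filter, Finset.mem_powerset]
    refine ⟨by simpa using ha, ?_, b, hb, by simpa using hab.symm, by simpa using hnab⟩
    rw [Finset.coe_singleton]
    have : Subsingleton ({a} : Set V) := inferInstance
    exact { preconnected := fun x y => by rw [Subsingleton.elim x y]
            nonempty := ⟨⟨a, rfl⟩⟩ }

/-- Walk version of isometry. -/
def AuxIsom {V : Type*} (G : SimpleGraph V) (A : Set V) : Prop :=
  ∀ x ∈ A, ∀ y ∈ A, ∃ p : G.Walk x y, (∀ z ∈ p.support, z ∈ A) ∧ p.length ≤ G.dist x y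

lemma aux_isom {V : Type*} (G : SimpleGraph V) (A : Set V) (hne : A.Nonempty)
    (h : AuxIsom G A) : IsIsomSub G A := by
  have hc : (G.induce A).Connected :=
    { preconnected := fun x y => by
        obtain ⟨p, hp, _⟩ := h x x.2 y y.2
        exact ⟨p.induce A hp⟩
      nonempty := hne.to_subtype }
  refine ⟨hc, fun x y => le_antisymm ?_ ?_⟩
  · obtain ⟨p, hp, hl⟩ := h x x.2 y y.2
    have h1 := dist_le (p.induce A hp)
    have h2 : (p.induce A hp).length = p.length := by
      have := congrArg Walk.length (Walk.map_induce p hp)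
      rwa [Walk.length_map] at this
    exact h1.trans (h2 ▸ hl)
  · obtain ⟨q, hq⟩ := hc.exists_walk_length_eq_dist x y
    have h1 := dist_le (q.map (Embedding.induce A).toHom)
    rw [Walk.length_map, hq] at h1
    exact h1

lemma aux_reroute {V : Type*} (G : SimpleGraph V) (A : Set V) (v : V)
    (hv : ∀ a ∈ A, ∀ b ∈ A, G.Adj v a → G.Adj v b →
      a ≠ b → ¬ G.Adj a b → ∃ w ∈ A, w ≠ v ∧ G.Adj w a ∧ G.Adj w b) (n : ℕ) :
    ∀ x y : V, x ≠ v → y ≠ v → ∀ p : G.Walk x y, p.length = n → (∀ z ∈ p.support, z ∈ A) →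
      ∃ q : G.Walk x y, q.length ≤ n ∧ ∀ z ∈ q.support, z ∈ A ∧ z ≠ v := by
  induction n using Nat.strong_induction_on with
  | _ n ih =>
  intro x y hx hy p hp hpA
  cases p with
  | nil => exact ⟨Walk.nil, by simp, by simpa using ⟨hpA x (by simp), hx⟩⟩
  | @cons _ z _ hxz p' =>
    have hxA : x ∈ A := hpA x (by simp)
    rw [Walk.length_cons] at hp
    by_cases hz : z = v
    · subst hz
      cases p' with
      | nil => exact absurd rfl hy
      | @cons _ z' _ hzz p'' =>
        rw [Walk.length_cons] at hp
        have hz'A : z' ∈ A := hpA z' (by simp)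
        obtain ⟨q, hq, hqA⟩ := ih p''.length (by omega) z' y hzz.ne' hy p'' rfl
          (fun u hu => hpA u (by simp [hu]))
        by_cases h1 : x = z'
        · subst h1
          exact ⟨q, by omega, hqA⟩
        · by_cases h2 : G.Adj x z'
          · refine ⟨Walk.cons h2 q, by rw [Walk.length_cons]; omega, ?_⟩
            intro u hu
            rw [Walk.support_cons, List.mem_cons] at hu
            rcases hu with rfl | hu
            · exact ⟨hxA, hx⟩
            · exact hqA u hu
          · obtain ⟨w, hwA, hwv, hwx, hwz⟩ := hv x hxA z' hz'A hxz.symm hzz h1 h2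
            refine ⟨Walk.cons hwx.symm (Walk.cons hwz q),
              by rw [Walk.length_cons, Walk.length_cons]; omega, ?_⟩
            intro u hu
            rw [Walk.support_cons, List.mem_cons, Walk.support_cons, List.mem_cons] at hu
            rcases hu with rfl | rfl | hu
            · exact ⟨hxA, hx⟩
            · exact ⟨hwA, hwv⟩
            · exact hqA u hu
    · obtain ⟨q, hq, hqA⟩ := ih p'.length (by omega) z y hz hy p' rfl
        (fun u hu => hpA u (by simp [hu]))
      refine ⟨Walk.cons hxz q, by rw [Walk.length_cons]; omega, ?_⟩
      intro u hu
      rw [Walk.support_cons, List.mem_cons] at hu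
      rcases hu with rfl | hu
      · exact ⟨hxA, hx⟩
      · exact hqA u hu

lemma aux_list {V : Type*} (G : SimpleGraph V)
    (hch : ∀ n : ℕ, 5 ≤ n → ∀ s : Set V, IsEmpty ((G.induce s) ≃g cycleGraph n)) (n : ℕ) :
    ∀ A : Finset V, A.card = n → AuxIsom G (A : Set V) →
      ∃ l : List V, l.Nodup ∧ (∀ x, x ∈ l ↔ x ∈ A) ∧
        ∀ i, AuxIsom G {x | x ∈ l.drop i} := by
  classical
  induction n with
  | zero =>
    intro A hA _
    rw [Finset.card_eq_zero] at hA
    subst hA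
    exact ⟨[], by simp, by simp, by simp [AuxIsom]⟩
  | succ n ih =>
    intro A hA hI
    obtain ⟨v, hvA, hv⟩ := aux_good G hch (n + 1) A hA (Finset.card_pos.mp (by omega))
    obtain ⟨l, hl, hlm, hls⟩ := ih (A.erase v) (by rw [Finset.card_erase_of_mem hvA]; omega) (by
      intro x hx y hy
      simp only [Finset.mem_coe, Finset.mem_erase] at hx hy
      obtain ⟨p, hp, hpl⟩ := hI x hx.2 y hy.2
      obtain ⟨q, hq, hqA⟩ := aux_reroute G A v hv p.length x y hx.1 hy.1 p rfl hp
      refine ⟨q, fun z hz => ?_, hq.trans hpl⟩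
      simp only [Finset.mem_coe, Finset.mem_erase]
      exact ⟨(hqA z hz).2, (hqA z hz).1⟩)
    have hm : ∀ x, x ∈ v :: l ↔ x ∈ A := by
      intro x
      rw [List.mem_cons, hlm, Finset.mem_erase]
      by_cases h : x = v
      · subst h; simpa using hvA
      · simp [h]
    refine ⟨v :: l, ?_, hm, ?_⟩
    · rw [List.nodup_cons]
      exact ⟨by simp [hlm], hl⟩
    · intro i
      cases i with
      | zero =>
        have : {x | x ∈ (v :: l).drop 0} = (A : Set V) := by
          ext x
          exact hm x
        rw [this]
        exact hI
      | succ i => exact hls i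

/-- Every finite simple connected graph with no induced cycle of length `5`
or greater (i.e. every `4`-chordal graph) is sequentially distance
preserving. -/
theorem four_chordal_implies_sdp {V : Type*} [Fintype V] (G : SimpleGraph V)
    (hG : G.Connected)
    (hchordal : ∀ n : ℕ, 5 ≤ n → ∀ s : Set V,
      IsEmpty ((G.induce s) ≃g cycleGraph n)) :
    SeqDistPres G := by
  classical
  obtain ⟨l, hl, hlm, hls⟩ := aux_list G hchordal _ Finset.univ rfl (by
    intro x _ y _
    obtain ⟨p, hp⟩ := hG.exists_walk_length_eq_dist x y
    exact ⟨p, by simp, hp.le⟩)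
  have hlen : Fintype.card V = l.length := by
    have h1 : l.toFinset = Finset.univ := by
      ext x; simpa using hlm x
    rw [← List.toFinset_card_of_nodup hl, h1, Finset.card_univ]
  refine ⟨(finCongr hlen).trans
    (List.Nodup.getEquivOfForallMemList l hl (fun x => (hlm x).mpr (Finset.mem_univ x))), ?_⟩
  intro i _ hi
  have hset : {v : V | ∃ j : Fin (Fintype.card V), i ≤ (j : ℕ) ∧ ((finCongr hlen).trans
    (List.Nodup.getEquivOfForallMemList l hl (fun x => (hlm x).mpr (Finset.mem_univ x)))) j = v}
      = {x | x ∈ l.drop i} := by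
    ext x
    simp only [Set.mem_setOf_eq, List.mem_drop_iff_getElem]
    constructor
    · rintro ⟨j, hj, rfl⟩
      have := j.2
      refine ⟨j - i, by omega, ?_⟩
      simp [Nat.add_sub_cancel' hj, Nat.sub_add_cancel hj]
    · rintro ⟨k, hk, rfl⟩
      refine ⟨⟨i + k, by omega⟩, by simp, ?_⟩
      simp [Nat.add_comm]
  rw [hset]
  refine aux_isom G _ ?_ (hls i)
  have : 0 < (l.drop i).length := by rw [List.length_drop]; omega
  exact ⟨_, List.getElem_mem this⟩
end

section
/- Every finite simple connected 4-chordal graph is distance preserving. That is, if G contains no induced cycle of length 5 or greater, then for every i with 1 ≤ i ≤ |V(G)| the graph G has an isometric subgraph on exactly i vertices. -/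
open SimpleGraph

/-- `G` is distance preserving: it has an isometric subgraph of every order
`1 ≤ i ≤ |V(G)|`. -/
def DistPres {V : Type*} [Fintype V] (G : SimpleGraph V) : Prop :=
  ∀ i : ℕ, 1 ≤ i → i ≤ Fintype.card V →
    ∃ A : Set V, A.ncard = i ∧ IsIsomSub G A

namespace FCdp

def nn {W : Type*} (H : SimpleGraph W) (u a : W) : Prop := a ≠ u ∧ ¬ H.Adj u a

def res {W : Type*} (H : SimpleGraph W) (P : W → Prop) : SimpleGraph W where
  Adj a b := H.Adj a b ∧ P a ∧ P b
  symm := ⟨fun _ _ h => ⟨h.1.symm, h.2.2, h.2.1⟩⟩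
  loopless := ⟨fun _ h => h.1.ne rfl⟩

lemma cyc_adj {n : ℕ} (hn : 2 ≤ n) (i j : Fin n) :
    (cycleGraph n).Adj i j ↔ (i.val + 1 = j.val ∨ j.val + 1 = i.val ∨
      (i.val = 0 ∧ j.val + 1 = n) ∨ (j.val = 0 ∧ i.val + 1 = n)) := by
  rw [cycleGraph_adj']
  have hi := i.isLt
  have hj := j.isLt
  have key : ∀ a b : Fin n, (a - b).val = 1 ↔
      (b.val + 1 = a.val ∨ (a.val = 0 ∧ b.val + 1 = n)) := by
    intro a b
    have ha := a.isLt
    have hb := b.isLt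
    by_cases h : b ≤ a
    · rw [Fin.sub_val_of_le h]
      have : b.val ≤ a.val := h
      omega
    · have h' : a < b := not_le.mp h
      rw [Fin.coe_sub_iff_lt.mpr h']
      have : a.val < b.val := h'
      omega
  rw [key, key]
  tauto

lemma hole {W : Type*} (H : SimpleGraph W)
    (hf : ∀ n : ℕ, 5 ≤ n → (cycleGraph n ↪g H) → False)
    (w x y : W) (hx : H.Adj w x) (hy : H.Adj w y) (hxy : x ≠ y) (hn : ¬ H.Adj x y)
    (hr : (res H (fun a => nn H w a ∨ a = x ∨ a = y)).Reachable x y) :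
    ∃ c, c ≠ w ∧ H.Adj x c ∧ H.Adj c y := by
  by_contra hc
  push Not at hc
  set P : W → Prop := fun a => nn H w a ∨ a = x ∨ a = y with hP
  set Q := res H P with hQ
  obtain ⟨p, hp, hlen⟩ := hr.exists_path_of_dist
  obtain ⟨k, hk⟩ : ∃ k, p.length = k := ⟨_, rfl⟩
  have hPw : ¬ P w := by
    rintro (h | h | h)
    · exact h.1 rfl
    · exact hx.ne h
    · exact hy.ne h
  have h0 : p.getVert 0 = x := p.getVert_zero
  have hkk : p.getVert k = y := hk ▸ p.getVert_length
  have hstep : ∀ i, i < k → Q.Adj (p.getVert i) (p.getVert (i+1)) :=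
    fun i hi => p.adj_getVert_succ (hk ▸ hi)
  have hk3 : 3 ≤ k := by
    by_contra hlt
    have : k = 0 ∨ k = 1 ∨ k = 2 := by omega
    rcases this with h | h | h
    · rw [h, h0] at hkk; exact hxy hkk
    · have := hstep 0 (by omega)
      rw [h] at hkk
      rw [h0, zero_add, hkk] at this
      exact hn this.1
    · have h1 := hstep 0 (by omega)
      have h2 := hstep 1 (by omega)
      rw [h] at hkk
      rw [h0, zero_add] at h1
      norm_num at h2
      rw [hkk] at h2
      refine hc (p.getVert 1) ?_ h1.1 h2.1
      intro h
      apply hPw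
      rw [← h]
      exact h1.2.2
  have hPi : ∀ i, i ≤ k → P (p.getVert i) := by
    intro i hi
    rcases Nat.lt_or_ge i k with h | h
    · exact (hstep i h).2.1
    · have : i = k := by omega
      rw [this, hkk]; exact Or.inr (Or.inr rfl)
  have hind : ∀ i j, i ≤ j → j ≤ k → H.Adj (p.getVert i) (p.getVert j) → i + 1 = j := by
    intro i j hij hj ha
    have hne : i ≠ j := by
      rintro rfl; exact ha.ne rfl
    have hq : Q.Adj (p.getVert i) (p.getVert j) := ⟨ha, hPi i (by omega), hPi j hj⟩
    have := dist_le ((p.take i).append ((Walk.cons hq (p.drop j))))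
    rw [Walk.length_append, Walk.length_cons, Walk.take_length, Walk.drop_length, ← hlen, hk,
      min_eq_left (by omega)] at this
    omega
  have hinj : ∀ i j, i ≤ k → j ≤ k → p.getVert i = p.getVert j → i = j :=
    fun i j hi hj h => hp.getVert_injOn (hk ▸ hi : i ≤ p.length) (hk ▸ hj : j ≤ p.length) h
  have hwadj : ∀ i, i ≤ k → (H.Adj w (p.getVert i) ↔ i = 0 ∨ i = k) := by
    intro i hi
    constructor
    · intro h
      rcases hPi i hi with h' | h' | h'
      · exact absurd h h'.2
      · left; exact hinj i 0 hi (by omega) (h'.trans h0.symm)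
      · right; exact hinj i k hi le_rfl (h'.trans hkk.symm)
    · rintro (rfl | rfl)
      · rw [h0]; exact hx
      · rw [hkk]; exact hy
  have hPadj : ∀ i j, i ≤ k → j ≤ k →
      (H.Adj (p.getVert i) (p.getVert j) ↔ i + 1 = j ∨ j + 1 = i) := by
    intro i j hi hj
    constructor
    · intro h
      rcases le_total i j with hij | hij
      · left; exact hind i j hij hj h
      · right; exact hind j i hij hi h.symm
    · rintro (rfl | rfl)
      · exact (hstep i (by omega)).1
      · exact (hstep j (by omega)).1.symm
  have hwne : ∀ i, i ≤ k → p.getVert i ≠ w := by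
    intro i hi h
    apply hPw; rw [← h]; exact hPi i hi
  refine hf (k+2) (by omega)
    ⟨⟨fun i => if i.val ≤ k then p.getVert i.val else w, ?_⟩, ?_⟩
  · intro i j hij
    have hi := i.isLt
    have hj := j.isLt
    apply Fin.ext
    dsimp only at hij
    split_ifs at hij with h1 h2 h2
    · exact hinj _ _ h1 h2 hij
    · exact absurd hij (hwne _ h1)
    · exact absurd hij.symm (hwne _ h2)
    · omega
  · intro i j
    have hi := i.isLt
    have hj := j.isLt
    rw [cyc_adj (by omega)]
    change H.Adj (if i.val ≤ k then p.getVert i.val else w)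
      (if j.val ≤ k then p.getVert j.val else w) ↔ _
    split_ifs with h1 h2 h2
    · rw [hPadj _ _ h1 h2]; omega
    · rw [H.adj_comm, hwadj _ h1]; omega
    · rw [hwadj _ h2]; omega
    · simp only [SimpleGraph.irrefl, false_iff]; omega

lemma avoid {W : Type*} [Finite W] [Nonempty W] (H : SimpleGraph W)
    (hf : ∀ n : ℕ, 5 ≤ n → (cycleGraph n ↪g H) → False) :
    ∃ v, ∀ x y, H.Adj v x → H.Adj v y → x ≠ y → ¬ H.Adj x y →
      ∃ c, c ≠ v ∧ H.Adj x c ∧ H.Adj c y := by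
  classical
  by_cases hcomp : ∃ q : W × W, nn H q.1 q.2
  swap
  · push Not at hcomp
    obtain ⟨v⟩ := ‹Nonempty W›
    refine ⟨v, fun x y _ _ hne hna => absurd ⟨hne.symm, hna⟩ (hcomp (x, y))⟩
  let R : W → W → Set W := fun u z => {t | (res H (nn H u)).Reachable z t}
  obtain ⟨⟨u, z⟩, huz, hmin⟩ := Set.exists_min_image {q : W × W | nn H q.1 q.2}
    (fun q => (R q.1 q.2).ncard) (Set.toFinite _) hcomp
  have huz : nn H u z := huz
  obtain ⟨w, hwC, hwmin⟩ := Set.exists_min_image (R u z)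
    (fun a => (insert a (H.neighborSet a)).ncard) (Set.toFinite _) ⟨z, Reachable.refl z⟩
  have hnn : ∀ u z t, nn H u z → t ∈ R u z → nn H u t := by
    intro u z t h ht
    have ht : Relation.ReflTransGen (res H (nn H u)).Adj z t := (reachable_iff_reflTransGen _ _).1 ht
    induction ht with
    | refl => exact h
    | tail _ h2 _ => exact h2.2.2
  have huw : nn H u w := hnn _ _ _ huz hwC
  have hwu : nn H w u := ⟨huw.1.symm, fun h => huw.2 h.symm⟩
  have hCstep : ∀ a b, a ∈ R u z → H.Adj a b → nn H u b → b ∈ R u z := by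
    intro a b ha hab hb
    have : (res H (nn H u)).Adj a b := ⟨hab, hnn _ _ _ huz ha, hb⟩
    exact Reachable.trans ha this.reachable
  have cases3 : ∀ t, t = u ∨ H.Adj u t ∨ nn H u t := by
    intro t; unfold nn; tauto
  have hnear : ∀ t, nn H w t → (t = u ∨ H.Adj u t) → (res H (nn H w)).Reachable t u := by
    rintro t ht (rfl | h)
    · exact Reachable.refl _
    · have : (res H (nn H w)).Adj t u := ⟨h.symm, ht, hwu⟩
      exact this.reachable
  have claim1 : ∀ t ∈ R u z, nn H w t → (res H (nn H w)).Reachable t u := by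
    intro t htC ht
    by_contra hcon
    have hsub : R w t ⊆ R u z := by
      intro s hs
      have hs' : Relation.ReflTransGen (res H (nn H w)).Adj t s :=
        (reachable_iff_reflTransGen _ _).1 hs
      clear hs
      induction hs' with
      | refl => exact htC
      | @tail b c h1 h2 ih =>
        have hc : (res H (nn H w)).Reachable t c :=
          (reachable_iff_reflTransGen _ _).2 (h1.tail h2)
        rcases cases3 c with h | h | h
        · exact absurd (hc.trans (hnear c h2.2.2 (Or.inl h))) hcon
        · exact absurd (hc.trans (hnear c h2.2.2 (Or.inr h))) hcon
        · exact hCstep b c ih h2.1 h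
    have hss : R w t ⊂ R u z := by
      refine ⟨hsub, fun h => ?_⟩
      exact (hnn w t w ht (h hwC)).1 rfl
    have h1 := Set.ncard_lt_ncard hss (Set.toFinite _)
    have h2 := hmin (w, t) ht
    exact absurd h1 (not_lt.mpr h2)
  have claim2 : ∀ x y, H.Adj w x → H.Adj w y → x ≠ y → ¬ H.Adj x y →
      ∃ t, H.Adj x t ∧ nn H w t ∧ (res H (nn H w)).Reachable t u := by
    intro x y hx hy hne hna
    rcases cases3 x with h | h | h
    · subst h; exact absurd hx hwu.2
    · exact ⟨u, h.symm, hwu, Reachable.refl _⟩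
    · have hxC : x ∈ R u z := hCstep w x hwC hx h
      have : ∃ t, H.Adj x t ∧ nn H w t := by
        by_contra hcon
        push Not at hcon
        have hss : insert x (H.neighborSet x) ⊂ insert w (H.neighborSet w) := by
          constructor
          · rintro s (rfl | hs)
            · exact Or.inr hx
            · have := hcon s hs
              unfold nn at this
              by_cases hsw : s = w
              · exact Or.inl hsw
              · right
                by_contra h'
                exact this ⟨hsw, h'⟩
          · intro hsup
            rcases hsup (Or.inr hy) with h' | h'
            · exact hne h'.symm
            · exact hna h'
        exact absurd (Set.ncard_lt_ncard hss (Set.toFinite _)) (not_lt.mpr (hwmin x hxC))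
      obtain ⟨t, hxt, ht⟩ := this
      refine ⟨t, hxt, ht, ?_⟩
      rcases cases3 t with h' | h' | h'
      · exact hnear t ht (Or.inl h')
      · exact hnear t ht (Or.inr h')
      · exact claim1 t (hCstep x t hxC hxt h') ht
  refine ⟨w, fun x y hx hy hne hna => hole H hf w x y hx hy hne hna ?_⟩
  obtain ⟨t, hxt, ht, htu⟩ := claim2 x y hx hy hne hna
  obtain ⟨s, hys, hs, hsu⟩ := claim2 y x hy hx hne.symm (fun h => hna h.symm)
  have hle : res H (nn H w) ≤ res H (fun a => nn H w a ∨ a = x ∨ a = y) :=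
    fun a b h => ⟨h.1, Or.inl h.2.1, Or.inl h.2.2⟩
  have e1 : (res H (fun a => nn H w a ∨ a = x ∨ a = y)).Adj x t :=
    ⟨hxt, Or.inr (Or.inl rfl), Or.inl ht⟩
  have e2 : (res H (fun a => nn H w a ∨ a = x ∨ a = y)).Adj s y :=
    ⟨hys.symm, Or.inl hs, Or.inr (Or.inr rfl)⟩
  exact e1.reachable.trans (((htu.trans hsu.symm).mono hle).trans e2.reachable)

def Loc {V : Type*} (G : SimpleGraph V) (A : Set V) : Prop :=
  ∀ u ∈ A, ∀ v ∈ A, u ≠ v → ∃ w ∈ A, G.Adj u w ∧ G.dist w v + 1 = G.dist u v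

lemma loc_isom {V : Type*} (G : SimpleGraph V) (hG : G.Connected) (A : Set V)
    (hne : A.Nonempty) (h : Loc G A) : IsIsomSub G A := by
  have key : ∀ n : ℕ, ∀ u v : A, G.dist (u : V) (v : V) = n →
      ∃ p : (G.induce A).Walk u v, p.length = n := by
    intro n
    induction n with
    | zero =>
      intro u v huv
      have : u = v := Subtype.ext ((hG.dist_eq_zero_iff).1 huv)
      subst this
      exact ⟨Walk.nil, rfl⟩
    | succ n ih =>
      intro u v huv
      have hne : (u : V) ≠ v := by
        intro e; rw [e, SimpleGraph.dist_self] at huv; omega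
      obtain ⟨w, hw, hadj, hd⟩ := h u u.2 v v.2 hne
      obtain ⟨p, hp⟩ := ih ⟨w, hw⟩ v (by simp only; omega)
      have ha : (G.induce A).Adj u ⟨w, hw⟩ := hadj
      exact ⟨Walk.cons ha p, by simp [hp]⟩
  have hconn : (G.induce A).Connected := by
    have : Nonempty A := hne.to_subtype
    refine ⟨fun u v => ?_⟩
    obtain ⟨p, _⟩ := key _ u v rfl
    exact ⟨p⟩
  refine ⟨hconn, fun u v => le_antisymm ?_ ?_⟩
  · obtain ⟨p, hp⟩ := key _ u v rfl
    rw [← hp]; exact dist_le p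
  · obtain ⟨p, hp⟩ := hconn.exists_walk_length_eq_dist u v
    have := dist_le (p.map (Embedding.induce A).toHom)
    rw [Walk.length_map, hp] at this
    exact this

lemma loc_univ {V : Type*} (G : SimpleGraph V) (hG : G.Connected) : Loc G Set.univ := by
  intro u _ v _ hne
  obtain ⟨p, hp⟩ := hG.exists_walk_length_eq_dist u v
  cases p with
  | nil => exact absurd rfl hne
  | @cons _ w _ h p =>
    refine ⟨w, trivial, h, ?_⟩
    rw [Walk.length_cons] at hp
    have h1 := dist_le p
    have h2 : G.dist u v ≤ G.dist u w + G.dist w v := hG.dist_triangle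
    rw [dist_eq_one_iff_adj.2 h] at h2
    omega

lemma loc_step {V : Type*} [Finite V] (G : SimpleGraph V) (hG : G.Connected)
    (hf : ∀ n : ℕ, 5 ≤ n → (cycleGraph n ↪g G) → False)
    (A : Set V) (hne : A.Nonempty) (h : Loc G A) : ∃ v ∈ A, Loc G (A \ {v}) := by
  have : Nonempty A := hne.to_subtype
  obtain ⟨⟨v, hv⟩, hav⟩ := avoid (G.induce A)
    (fun n hn f => hf n hn (f.trans (Embedding.induce A)))
  refine ⟨v, hv, ?_⟩
  rintro u ⟨hu, huv⟩ x ⟨hx, hxv⟩ hux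
  obtain ⟨w, hw, hadj, hd⟩ := h u hu x hx hux
  by_cases hwv : w = v
  swap
  · exact ⟨w, ⟨hw, hwv⟩, hadj, hd⟩
  subst hwv
  obtain ⟨w', hw', hadj', hd'⟩ := h w hw x hx (fun e => hxv e.symm)
  have t1 : ∀ a b : V, G.Adj a b → G.dist a x ≤ 1 + G.dist b x := by
    intro a b hab
    have h2 : G.dist a x ≤ G.dist a b + G.dist b x := hG.dist_triangle
    rwa [dist_eq_one_iff_adj.2 hab] at h2
  obtain ⟨⟨c, hc⟩, hcv, h1, h2⟩ := hav ⟨u, hu⟩ ⟨w', hw'⟩ hadj.symm hadj'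
    (by
      intro e
      have : u = w' := congrArg Subtype.val e
      subst this; omega)
    (by
      intro e
      have e' : G.Adj u w' := e
      have := t1 _ _ e'
      omega)
  have h1 : G.Adj u c := h1
  have h2 : G.Adj c w' := h2
  refine ⟨c, ⟨hc, fun e => hcv (Subtype.ext e)⟩, h1, ?_⟩
  have := t1 _ _ h1
  have := t1 _ _ h2
  omega

end FCdp

/-- Every finite simple connected graph with no induced cycle of length `5`
or greater (i.e. every `4`-chordal graph) is distance preserving. -/
theorem four_chordal_implies_dp {V : Type*} [Fintype V] (G : SimpleGraph V)
    (hG : G.Connected)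
    (hchordal : ∀ n : ℕ, 5 ≤ n → ∀ s : Set V,
      IsEmpty ((G.induce s) ≃g cycleGraph n)) :
    DistPres G := by
  have hf : ∀ n : ℕ, 5 ≤ n → (cycleGraph n ↪g G) → False := by
    intro n hn f
    refine (hchordal n hn (Set.range f)).false
      (RelIso.symm ⟨Equiv.ofInjective f f.injective, ?_⟩)
    intro a b
    exact f.map_rel_iff
  intro i hi hcard
  have key : ∀ d : ℕ, d ≤ Fintype.card V →
      ∃ A : Set V, A.ncard = Fintype.card V - d ∧ FCdp.Loc G A := by
    intro d
    induction d with
    | zero =>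
      intro _
      exact ⟨Set.univ, by rw [Set.ncard_univ, Nat.card_eq_fintype_card]; rfl,
        FCdp.loc_univ G hG⟩
    | succ d ih =>
      intro hd
      obtain ⟨A, hA, hL⟩ := ih (by omega)
      have hne : A.Nonempty := by
        rw [← Set.ncard_pos]; omega
      obtain ⟨v, hv, hL'⟩ := FCdp.loc_step G hG hf A hne hL
      refine ⟨A \ {v}, ?_, hL'⟩
      rw [Set.ncard_sdiff_singleton_of_mem hv]; omega
  obtain ⟨A, hA, hL⟩ := key (Fintype.card V - i) (by omega)
  refine ⟨A, by omega, FCdp.loc_isom G hG A ?_ hL⟩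
  rw [← Set.ncard_pos]; omega
end

section
/- Let G be a finite simple connected graph that is not sequentially distance preserving. Then G contains an induced cycle of length k for some k ≥ 5. -/
open SimpleGraph

lemma aux_insert {V : Type*} (G : SimpleGraph V) (D : Set V) (x y : V) (hy : y ∈ D)
    (hxy : G.Adj x y) (hD : (G.induce D).Preconnected) :
    (G.induce (insert x D)).Preconnected := by
  have key : ∀ z : ↥(insert x D : Set V),
      (G.induce (insert x D)).Reachable z ⟨y, Set.mem_insert_of_mem _ hy⟩ := by
    rintro ⟨z, rfl | hz⟩
    · exact Adj.reachable (by simpa using hxy)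
    · exact (hD ⟨z, hz⟩ ⟨y, hy⟩).map (G.induceHomOfLE (Set.subset_insert x D)).toHom
  exact fun u w => (key u).trans (key w).symm

lemma aux_geod {V : Type*} (H : SimpleGraph V) (hH : H.Connected) (x y : V) :
    ∃ f : ℕ → V, f 0 = x ∧ f (H.dist x y) = y ∧
      ∀ i j, i ≤ j → j ≤ H.dist x y → H.dist (f i) (f j) = j - i := by
  obtain ⟨p, hp⟩ := hH.exists_walk_length_eq_dist x y
  have hle : ∀ i d, i + d ≤ p.length → H.dist (p.getVert i) (p.getVert (i + d)) ≤ d := by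
    intro i d
    induction d with
    | zero => intro _; simp
    | succ d ih =>
      intro h
      have h1 := ih (by omega)
      have h2 := hH.dist_triangle (u := p.getVert i) (v := p.getVert (i + d))
        (w := p.getVert (i + (d + 1)))
      have h3 : H.dist (p.getVert (i + d)) (p.getVert (i + (d + 1))) = 1 :=
        dist_eq_one_iff_adj.2 (p.adj_getVert_succ (by omega))
      omega
  refine ⟨p.getVert, by simp, by rw [← hp]; simp, ?_⟩
  intro i j hij hj
  rw [← hp] at hj
  have h1 := hle 0 i (by omega)
  have h2 := hle i (j - i) (by omega)
  have h3 := hle j (p.length - j) (by omega)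
  rw [show i + (j - i) = j by omega] at h2
  rw [show j + (p.length - j) = p.length by omega, Walk.getVert_length] at h3
  rw [zero_add, Walk.getVert_zero] at h1
  have h4 := hH.dist_triangle (u := x) (v := p.getVert i) (w := y)
  have h5 := hH.dist_triangle (u := p.getVert i) (v := p.getVert j) (w := y)
  omega

/-- A long hole as an embedding. -/
def HasHole {V : Type*} (G : SimpleGraph V) : Prop :=
  ∃ k : ℕ, 5 ≤ k ∧ Nonempty (cycleGraph k ↪g G)

lemma aux_hole {V : Type*} (G : SimpleGraph V) (f : ℕ → V) (v : V) (l : ℕ) (hl : 3 ≤ l)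
    (hv : ∀ i, i ≤ l → f i ≠ v)
    (hv' : ∀ i, i ≤ l → (G.Adj v (f i) ↔ (i = 0 ∨ i = l)))
    (hf : ∀ i j, i < j → j ≤ l → f i ≠ f j ∧ (G.Adj (f i) (f j) ↔ j = i + 1)) :
    HasHole G := by
  refine ⟨l + 2, by omega, ⟨⟨⟨fun i => if i.1 ≤ l then f i.1 else v, ?_⟩, ?_⟩⟩⟩
  · rintro ⟨i, hi⟩ ⟨j, hj⟩ h
    simp only at h
    simp only [Fin.mk.injEq]
    split_ifs at h with h1 h2 h2
    · rcases lt_trichotomy i j with h3 | h3 | h3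
      · exact absurd h (hf i j h3 h2).1
      · exact h3
      · exact absurd h.symm (hf j i h3 h1).1
    · exact absurd h (hv i h1)
    · exact absurd h.symm (hv j h2)
    · omega
  · have main : ∀ i j : Fin (l + 2), i < j →
        (G.Adj (if i.1 ≤ l then f i.1 else v) (if j.1 ≤ l then f j.1 else v) ↔
          (cycleGraph (l + 2)).Adj i j) := by
      rintro ⟨i, hi⟩ ⟨j, hj⟩ hij
      have hij' : i < j := hij
      have e1 : ((⟨j, hj⟩ : Fin (l + 2)) - ⟨i, hi⟩).1 = j - i :=
        Fin.sub_val_of_le hij.le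
      have e2 : ((⟨i, hi⟩ : Fin (l + 2)) - ⟨j, hj⟩).1 = l + 2 - j + i := by
        rw [Fin.sub_def]
        exact Nat.mod_eq_of_lt (by simp only; omega)
      rw [cycleGraph_adj', e1, e2]
      simp only
      rw [if_pos (by omega : i ≤ l)]
      split_ifs with h
      · rw [(hf i j hij' h).2]; omega
      · rw [G.adj_comm, hv' i (by omega)]; omega
    intro i j
    change G.Adj (if i.1 ≤ l then f i.1 else v) (if j.1 ≤ l then f j.1 else v) ↔ _
    rcases lt_trichotomy i j with h | h | h
    · exact main i j h
    · subst h; simp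
    · rw [G.adj_comm, (cycleGraph (l+2)).adj_comm]; exact main j i h

lemma aux_common_s5 {V : Type*} (G : SimpleGraph V) (hno : ¬ HasHole G) (v a b : V) (D : Set V)
    (hD : (G.induce D).Preconnected) (hvD : ∀ x ∈ D, x ≠ v ∧ ¬ G.Adj v x)
    (hva : G.Adj v a) (hvb : G.Adj v b) (hab : a ≠ b) (hnab : ¬ G.Adj a b)
    (ha : ∃ x ∈ D, G.Adj a x) (hb : ∃ x ∈ D, G.Adj b x) :
    ∃ w, w ≠ v ∧ G.Adj a w ∧ G.Adj w b := by
  obtain ⟨x, hx, hax⟩ := ha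
  obtain ⟨y, hy, hby⟩ := hb
  have h1 := aux_insert G D b y hy hby hD
  have h2 := aux_insert G (insert b D) a x (Set.mem_insert_of_mem _ hx) hax h1
  set E : Set V := insert a (insert b D) with hE
  have haE : a ∈ E := by simp [hE]
  have hbE : b ∈ E := by simp [hE]
  have hconn : (G.induce E).Connected := @Connected.mk _ _ h2 ⟨⟨a, haE⟩⟩
  obtain ⟨f, f0, fl, hf⟩ := aux_geod (G.induce E) hconn ⟨a, haE⟩ ⟨b, hbE⟩
  set l := (G.induce E).dist ⟨a, haE⟩ ⟨b, hbE⟩ with hl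
  have hl0 : l ≠ 0 := fun h => hab (by
    have := hconn.dist_eq_zero_iff.1 (hl.symm.trans h); simpa using this)
  have hl1 : l ≠ 1 := fun h => hnab (by
    have := dist_eq_one_iff_adj.1 (hl.symm.trans h); simpa using this)
  have hadj : ∀ i j, i < j → j ≤ l → (f i ≠ f j ∧ (G.Adj (f i).1 (f j).1 ↔ j = i + 1)) := by
    intro i j hij hj
    have h := hf i j hij.le hj
    constructor
    · intro he
      rw [he, SimpleGraph.dist_self] at h; omega
    · rw [← induce_adj, ← dist_eq_one_iff_adj, h]; omega
  have hmid : ∀ i, 0 < i → i < l → (f i).1 ∈ D := by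
    intro i h0 hil
    have q1 := (hadj 0 i h0 hil.le).1
    have q2 := (hadj i l hil le_rfl).1
    rw [f0] at q1
    rw [fl] at q2
    rcases (f i).2 with h | h | h
    · exact absurd (Subtype.ext h.symm) q1
    · exact absurd (Subtype.ext h) q2
    · exact h
  by_cases hl2 : l = 2
  · have q1 := (hadj 0 1 (by omega) (by omega)).2.2 rfl
    have q2 := (hadj 1 2 (by omega) (by omega)).2.2 rfl
    rw [f0] at q1
    rw [← hl2, fl] at q2
    exact ⟨f 1, (hvD _ (hmid 1 (by omega) (by omega))).1, q1, q2⟩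
  · exfalso
    apply hno
    refine aux_hole G (fun i => (f i).1) v l (by omega) ?_ ?_ ?_
    · intro i hi
      rcases Nat.eq_zero_or_pos i with rfl | h
      · simp only [f0]; exact hva.ne'
      · rcases hi.eq_or_lt with rfl | h'
        · simp only [fl]; exact hvb.ne'
        · exact (hvD _ (hmid i h h')).1
    · intro i hi
      rcases Nat.eq_zero_or_pos i with rfl | h
      · simp [f0, hva]
      · rcases hi.eq_or_lt with rfl | h'
        · simp [fl, hvb]
        · have := (hvD _ (hmid i h h')).2
          simp only [this, false_iff]; omega
    · intro i j hij hj
      exact ⟨fun h => (hadj i j hij hj).1 (Subtype.ext h), (hadj i j hij hj).2⟩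

lemma aux_parent {V : Type*} (G : SimpleGraph V) (hG : G.Connected) (r x : V)
    (hx : G.dist r x ≠ 0) : ∃ y, G.Adj x y ∧ G.dist r y + 1 = G.dist r x := by
  obtain ⟨f, f0, fl, hf⟩ := aux_geod G hG r x
  refine ⟨f (G.dist r x - 1), ?_, ?_⟩
  · have := hf (G.dist r x - 1) (G.dist r x) (by omega) le_rfl
    rw [fl] at this
    exact (dist_eq_one_iff_adj.1 (by omega)).symm
  · have := hf 0 (G.dist r x - 1) (by omega) (by omega)
    rw [f0] at this
    omega

lemma aux_main {V : Type*} [Finite V] [Nontrivial V] (G : SimpleGraph V) (hG : G.Connected)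
    (hno : ¬ HasHole G) :
    ∃ v, ∀ a b, G.Adj v a → G.Adj v b → a ≠ b → ¬ G.Adj a b →
      ∃ w, w ≠ v ∧ G.Adj a w ∧ G.Adj w b := by
  obtain ⟨r⟩ := hG.nonempty
  obtain ⟨m, -, hm⟩ := Set.exists_max_image (Set.univ : Set V) (G.dist r) Set.finite_univ ⟨r, trivial⟩
  obtain ⟨k, hk⟩ : ∃ k, k = G.dist r m := ⟨_, rfl⟩
  have hmax : ∀ x, G.dist r x ≤ k := fun x => hk ▸ hm x trivial
  have hk0 : k ≠ 0 := by
    intro h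
    obtain ⟨x, hx⟩ := exists_ne r
    have := hG.pos_dist_of_ne hx.symm
    have := hmax x
    omega
  have hlip : ∀ x y, G.Adj x y → G.dist r y ≤ G.dist r x + 1 := by
    intro x y h
    have h1 := hG.dist_triangle (u := r) (v := x) (w := y)
    rwa [dist_eq_one_iff_adj.2 h] at h1
  let C : V → Set V := fun x => {y | G.Adj x y ∧ G.dist r y + 1 = k}
  have hCne : ∀ x, G.dist r x = k → (C x).Nonempty := by
    intro x hx
    obtain ⟨y, h1, h2⟩ := aux_parent G hG r x (by omega)
    exact ⟨y, h1, by omega⟩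
  obtain ⟨v0, hv0, hv0min⟩ := Set.exists_min_image {x | G.dist r x = k} (fun x => (C x).ncard)
    (Set.toFinite _) ⟨m, hk.symm⟩
  let T : Set V := {b | G.dist r b = k ∧ Disjoint (C b) (C v0)}
  obtain ⟨v, ⟨hvk, hvC⟩, hvmin⟩ := Set.exists_min_image {x | G.dist r x = k ∧ C x = C v0}
    (fun x => (G.neighborSet x ∩ T).ncard) (Set.toFinite _) ⟨v0, hv0, rfl⟩
  refine ⟨v, ?_⟩
  simp only [Set.mem_ofPred_eq] at hv0 hv0min hvmin
  by_cases hk1 : k = 1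
  · -- r is universal
    intro a b hva hvb hab hnab
    have hr : ∀ x, x ≠ r → G.Adj x r := by
      intro x hx
      have h1 := hG.pos_dist_of_ne hx.symm
      have h2 := hmax x
      exact (dist_eq_one_iff_adj.1 (by omega)).symm
    have har : a ≠ r := by
      rintro rfl
      exact hnab (hr b hab.symm).symm
    have hbr : b ≠ r := by
      rintro rfl
      exact hnab (hr a hab)
    refine ⟨r, ?_, hr a har, (hr b hbr).symm⟩
    rintro rfl
    simp at hvk
    omega
  let D : Set V := {x | G.dist r x + 1 ≤ k ∧ ¬ G.Adj v x}
  have hlow : ∀ x, G.dist r x + 2 ≤ k → x ∈ D := by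
    intro x hx
    refine ⟨by omega, fun h => ?_⟩
    have := hlip x v h.symm
    omega
  have hDr : r ∈ D := hlow r (by simp; omega)
  have hDconn : (G.induce D).Preconnected := by
    have key : ∀ n, ∀ x : D, G.dist r x = n → (G.induce D).Reachable x ⟨r, hDr⟩ := by
      intro n
      induction n with
      | zero =>
        intro x hx
        have : r = x := hG.dist_eq_zero_iff.1 hx
        have : x = ⟨r, hDr⟩ := Subtype.ext this.symm
        rw [this]
      | succ n ih =>
        intro x hx
        obtain ⟨y, h1, h2⟩ := aux_parent G hG r x (by omega)
        have hx1 := x.2.1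
        have hyD : y ∈ D := hlow y (by omega)
        exact (Adj.reachable (G := G.induce D) (v := ⟨y, hyD⟩) h1).trans
          (ih ⟨y, hyD⟩ (by simp only; omega))
    exact fun x y => (key _ x rfl).trans (key _ y rfl).symm
  have hvD : ∀ x ∈ D, x ≠ v ∧ ¬ G.Adj v x := by
    intro x hx
    refine ⟨?_, hx.2⟩
    rintro rfl
    have := hx.1
    omega
  -- attachments
  have att1 : ∀ a, G.dist r a + 1 = k → ∃ x ∈ D, G.Adj a x := by
    intro a ha
    obtain ⟨y, h1, h2⟩ := aux_parent G hG r a (by omega)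
    exact ⟨y, hlow y (by omega), h1⟩
  have att2 : ∀ a, ¬ C a ⊆ C v0 → ∃ x ∈ D, G.Adj a x := by
    intro a ha
    obtain ⟨y, h1, h2⟩ := Set.not_subset.1 ha
    refine ⟨y, ⟨h1.2.le, fun h => h2 ?_⟩, h1.1⟩
    rw [← hvC]
    exact ⟨h, h1.2⟩
  have hCeq : ∀ a, G.dist r a = k → C a ⊆ C v0 → C a = C v0 := fun a ha h =>
    Set.eq_of_subset_of_ncard_le h (hv0min a ha)
  have hlev : ∀ a, G.Adj v a → G.dist r a = k ∨ G.dist r a + 1 = k := by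
    intro a h
    have h1 := hlip a v h.symm
    have h2 := hmax a
    omega
  -- half case: both in the top level, C a ⊆ C v0
  have half : ∀ a b, G.Adj v a → G.Adj v b → a ≠ b → ¬ G.Adj a b → G.dist r a = k →
      C a ⊆ C v0 → ∃ w, w ≠ v ∧ G.Adj a w ∧ G.Adj w b := by
    intro a b hva hvb hab hnab hak hsub
    have hCa := hCeq a hak hsub
    rcases hlev b hvb with hbk | hbk
    · by_cases hdis : Disjoint (C b) (C v0)
      · have hbT : b ∈ T := ⟨hbk, hdis⟩
        have : ∃ b', b' ∈ T ∧ G.Adj a b' ∧ ¬ G.Adj v b' := by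
          by_contra hcon
          push Not at hcon
          have hss : G.neighborSet a ∩ T ⊆ G.neighborSet v ∩ T := fun z hz =>
            ⟨hcon z hz.2 hz.1, hz.2⟩
          have heq := Set.eq_of_subset_of_ncard_le hss (hvmin a ⟨hak, hCa⟩)
          have : b ∈ G.neighborSet a ∩ T := heq ▸ ⟨hvb, hbT⟩
          exact hnab this.1
        obtain ⟨b', ⟨hb'k, hb'd⟩, hab', hvb'⟩ := this
        have attT : ∀ z, G.dist r z = k → Disjoint (C z) (C v0) → ∃ x ∈ D, G.Adj z x := by
          intro z hz hd
          apply att2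
          intro hs
          obtain ⟨y, hy⟩ := hCne z hz
          exact Set.disjoint_left.1 hd hy (hs hy)
        obtain ⟨x, hx, hb'x⟩ := attT b' hb'k hb'd
        obtain ⟨y, hy, hby⟩ := attT b hbk hdis
        refine aux_common_s5 G hno v a b (insert b' D) (aux_insert G D b' x hx hb'x hDconn) ?_
          hva hvb hab hnab ⟨b', Set.mem_insert _ _, hab'⟩ ⟨y, Set.mem_insert_of_mem _ hy, hby⟩
        rintro z (rfl | hz)
        · refine ⟨?_, hvb'⟩
          rintro rfl
          obtain ⟨y, hy⟩ := hCne z hb'k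
          exact Set.disjoint_left.1 hb'd hy (hvC ▸ hy)
        · exact hvD z hz
      · obtain ⟨w, hw1, hw2⟩ := Set.not_disjoint_iff.1 hdis
        rw [← hCa] at hw2
        refine ⟨w, ?_, hw2.1, hw1.1.symm⟩
        rintro rfl
        have := hw1.2
        omega
    · exfalso
      have : b ∈ C a := by rw [hCa, ← hvC]; exact ⟨hvb, hbk⟩
      exact hnab this.1
  intro a b hva hvb hab hnab
  by_cases hA : G.dist r a = k ∧ C a ⊆ C v0
  · exact half a b hva hvb hab hnab hA.1 hA.2
  by_cases hB : G.dist r b = k ∧ C b ⊆ C v0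
  · obtain ⟨w, h1, h2, h3⟩ := half b a hvb hva hab.symm (fun h => hnab h.symm) hB.1 hB.2
    exact ⟨w, h1, h3.symm, h2.symm⟩
  have att : ∀ z, G.Adj v z → ¬ (G.dist r z = k ∧ C z ⊆ C v0) → ∃ x ∈ D, G.Adj z x := by
    intro z hz hn
    rcases hlev z hz with h | h
    · exact att2 z fun h' => hn ⟨h, h'⟩
    · exact att1 z h
  exact aux_common_s5 G hno v a b D hDconn hvD hva hvb hab hnab (att a hva hA) (att b hvb hB)

lemma aux_walk {V : Type*} (G : SimpleGraph V) (S : Set V) (v : V)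
    (hv : ∀ a b, a ∈ S → b ∈ S → G.Adj v a → G.Adj v b → a ≠ b → ¬ G.Adj a b →
      ∃ w ∈ S, w ≠ v ∧ G.Adj a w ∧ G.Adj w b) (n : ℕ) :
    ∀ (x y : V) (hx : x ∈ S) (hy : y ∈ S) (hxv : x ≠ v) (hyv : y ≠ v)
      (p : (G.induce S).Walk ⟨x, hx⟩ ⟨y, hy⟩), p.length ≤ n →
      ∃ q : (G.induce (S \ {v})).Walk ⟨x, hx, hxv⟩ ⟨y, hy, hyv⟩, q.length ≤ n := by
  induction n using Nat.strong_induction_on with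
  | _ n ih =>
  intro x y hx hy hxv hyv p hp
  cases p with
  | nil => exact ⟨Walk.nil, by simp⟩
  | @cons _ z _ h p =>
    obtain ⟨z, hz⟩ := z
    have hxz : G.Adj x z := h
    rw [Walk.length_cons] at hp
    by_cases hzv : z = v
    · subst hzv
      cases p with
      | nil => exact absurd rfl hyv
      | @cons _ b _ h' p =>
        obtain ⟨b, hb⟩ := b
        have hzb : G.Adj z b := h'
        rw [Walk.length_cons] at hp
        obtain ⟨q, hq⟩ := ih (n - 2) (by omega) b y hb hy hzb.ne' hyv p (by omega)
        by_cases hxb : x = b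
        · subst hxb
          exact ⟨q, by omega⟩
        by_cases hadj : G.Adj x b
        · exact ⟨Walk.cons (by simpa using hadj) q, by rw [Walk.length_cons]; omega⟩
        · obtain ⟨w, hwS, hwz, h1, h2⟩ := hv x b hx hb hxz.symm hzb hxb hadj
          exact ⟨Walk.cons (v := ⟨w, hwS, hwz⟩) (by simpa using h1)
            (Walk.cons (by simpa using h2) q), by simp only [Walk.length_cons]; omega⟩
    · obtain ⟨q, hq⟩ := ih (n - 1) (by omega) z y hz hy hzv hyv p (by omega)
      exact ⟨Walk.cons (by simpa using hxz) q, by rw [Walk.length_cons]; omega⟩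

lemma aux_step {V : Type*} [Finite V] (G : SimpleGraph V) (hno : ¬ HasHole G) (S : Set V)
    (hS : IsIsomSub G S) (hnt : S.Nontrivial) : ∃ v ∈ S, IsIsomSub G (S \ {v}) := by
  have : Nontrivial S := Set.nontrivial_coe_sort.2 hnt
  have hno' : ¬ HasHole (G.induce S) := by
    rintro ⟨k, hk, ⟨f⟩⟩
    exact hno ⟨k, hk, ⟨(Embedding.induce S).comp f⟩⟩
  obtain ⟨⟨v, hvS⟩, hv⟩ := aux_main (G.induce S) hS.1 hno'
  have hv' : ∀ a b, a ∈ S → b ∈ S → G.Adj v a → G.Adj v b → a ≠ b → ¬ G.Adj a b →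
      ∃ w ∈ S, w ≠ v ∧ G.Adj a w ∧ G.Adj w b := by
    intro a b ha hb h1 h2 h3 h4
    obtain ⟨⟨w, hw⟩, g1, g2, g3⟩ := hv ⟨a, ha⟩ ⟨b, hb⟩ h1 h2 (by simpa using h3) h4
    exact ⟨w, hw, by simpa using g1, g2, g3⟩
  refine ⟨v, hvS, ?_⟩
  have key : ∀ x y : ↥(S \ {v}), ∃ q : (G.induce (S \ {v})).Walk x y,
      q.length ≤ G.dist (x : V) y := by
    rintro ⟨x, hx, hxv⟩ ⟨y, hy, hyv⟩
    obtain ⟨p, hp⟩ := hS.1.exists_walk_length_eq_dist ⟨x, hx⟩ ⟨y, hy⟩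
    rw [hS.2] at hp
    exact aux_walk G S v hv' _ x y hx hy hxv hyv p hp.le
  have hne : Nonempty ↥(S \ {v}) := by
    obtain ⟨w, hw, hwv⟩ := hnt.exists_ne v
    exact ⟨⟨w, hw, hwv⟩⟩
  refine ⟨⟨fun x y => (key x y).choose.reachable⟩, fun x y => ?_⟩
  obtain ⟨q, hq⟩ := key x y
  apply le_antisymm ((dist_le q).trans hq)
  obtain ⟨p, hp⟩ := q.reachable.exists_walk_length_eq_dist
  rw [← hp]
  have := dist_le (p.map (Embedding.induce (G := G) (S \ {v})).toHom)
  rw [Walk.length_map] at this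
  exact this

lemma aux_list_s5 {V : Type*} [Finite V] (G : SimpleGraph V) (hno : ¬ HasHole G) (n : ℕ) :
    ∀ S : Set V, S.ncard = n + 1 → IsIsomSub G S → ∃ l : List V, l.Nodup ∧ {x | x ∈ l} = S ∧
      ∀ i, i < l.length → IsIsomSub G {x | x ∈ l.drop i} := by
  induction n with
  | zero =>
    intro S hS hiso
    obtain ⟨x, rfl⟩ := Set.ncard_eq_one.1 hS
    refine ⟨[x], by simp, by ext; simp, ?_⟩
    intro i hi
    have : i = 0 := by simpa using hi
    subst this
    have : {y | y ∈ [x].drop 0} = {x} := by ext; simp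
    rw [this]
    exact hiso
  | succ n ih =>
    intro S hS hiso
    obtain ⟨v, hv, hiso'⟩ := aux_step G hno S hiso (Set.one_lt_ncard_iff_nontrivial.1 (by omega))
    obtain ⟨l, h1, h2, h3⟩ := ih (S \ {v}) (by
      rw [Set.ncard_sdiff_singleton_of_mem hv]; omega) hiso'
    have hmem : ∀ x, x ∈ l ↔ x ∈ S ∧ x ≠ v := fun x => by
      have : x ∈ {x | x ∈ l} ↔ x ∈ S \ {v} := by rw [h2]
      simpa using this
    have hset : {x | x ∈ v :: l} = S := by
      ext x
      by_cases hx : x = v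
      · subst hx; simp [hv]
      · simp [hmem, hx]
    refine ⟨v :: l, List.nodup_cons.2 ⟨fun h => ((hmem v).1 h).2 rfl, h1⟩, hset, ?_⟩
    intro i hi
    cases i with
    | zero => rw [List.drop_zero, hset]; exact hiso
    | succ i => exact h3 i (by simpa using hi)

theorem not_sdp_implies_long_induced_cycle {V : Type*} [Fintype V]
    (G : SimpleGraph V) (hG : G.Connected) (hnsdp : ¬ SeqDistPres G) :
    ∃ k : ℕ, 5 ≤ k ∧ ∃ s : Set V, Nonempty ((G.induce s) ≃g cycleGraph k) := by
  by_cases hno : HasHole G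
  · obtain ⟨k, hk, ⟨f⟩⟩ := hno
    exact ⟨k, hk, Set.range f, ⟨f.isoInduceRange.symm⟩⟩
  exfalso
  apply hnsdp
  classical
  have huniv : IsIsomSub G Set.univ := by
    let φ : G.induce Set.univ ≃g G := induceUnivIso G
    have hc : (G.induce Set.univ).Connected := φ.connected_iff.2 hG
    refine ⟨hc, fun u v => le_antisymm ?_ ?_⟩
    · obtain ⟨p, hp⟩ := hG.exists_walk_length_eq_dist u.1 v.1
      rw [← hp, ← Walk.length_map φ.symm.toHom p]
      exact dist_le _
    · obtain ⟨p, hp⟩ := hc.exists_walk_length_eq_dist u v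
      rw [← hp, ← Walk.length_map φ.toHom p]
      exact dist_le (p.map φ.toHom)
  have := hG.nonempty
  have hpos : 0 < Fintype.card V := Fintype.card_pos
  obtain ⟨l, h1, h2, h3⟩ := aux_list_s5 G hno (Fintype.card V - 1) Set.univ (by
    rw [Set.ncard_univ, Nat.card_eq_fintype_card]; omega) huniv
  have hmem : ∀ x, x ∈ l := fun x => by
    have : x ∈ {x | x ∈ l} := by rw [h2]; trivial
    exact this
  let e0 : Fin l.length ≃ V := h1.getEquivOfForallMemList l hmem
  have hlen : Fintype.card V = l.length := by
    rw [← Fintype.card_congr e0, Fintype.card_fin]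
  refine ⟨(finCongr hlen).trans e0, fun i hi hi' => ?_⟩
  have := h3 i (by omega)
  convert this using 1
  ext x
  simp only [Set.mem_ofPred_eq, List.mem_iff_getElem, List.getElem_drop, List.length_drop]
  constructor
  · rintro ⟨j, hj, rfl⟩
    refine ⟨j - i, by omega, ?_⟩
    simp [e0, Nat.add_sub_cancel' hj]
  · rintro ⟨j, hj, rfl⟩
    exact ⟨⟨i + j, by omega⟩, by simp, by simp [e0]⟩
end
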